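/- Let Γ be the heat kernel on ℝ³: Γ(x,t) = (4πt)^{−3/2} exp(−|x|²/(4t)) for t > 0 and Γ(x,t) = 0 for t ≤ 0, and let ψ : ℝ → ℝ be a smooth function with 0 ≤ ψ ≤ 1, ψ(ξ) = 0 for ξ ≥ 1 and ψ(ξ) = 1 for ξ ≤ 1/2. Set Γ₁(x,t) := Γ(x,t) ψ(|x|) ψ(t) and Γ₂(x,t) := 2 ψ(t) ∇_x Γ(x,t)·∇_x(ψ(|x|)) + Γ(x,t) (ψ(t) Δ_x(ψ(|x|)) − ψ'(t) ψ(|x|)). Then there is a constant c₁ > 0 such that |∇_x Γ_i(ξ, s)| ≤ c₁/(|ξ|² + s)² for all ξ ∈ ℝ³, s > 0, and i = 1, 2. -/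

import Mathlib

noncomputable section
open Real

/-- `ℝ³` with the Euclidean norm. -/
abbrev E : Type := EuclideanSpace ℝ (Fin 3)

/-- Spatial partial derivative `∂ᵢ` of a scalar field on `ℝ³`. -/
def pdE (i : Fin 3) (f : E → ℝ) (x : E) : ℝ := fderiv ℝ f x (EuclideanSpace.single i 1)

/-- Spatial Laplacian of a scalar field on `ℝ³`. -/
def lapE (f : E → ℝ) (x : E) : ℝ := ∑ i, pdE i (fun y => pdE i f y) x

/-- The heat kernel `Γ` on `ℝ³`: `Γ(x,t) = (4πt)^{-3/2} exp(-|x|²/(4t))` for `t > 0`,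
and `0` for `t ≤ 0`. -/
def heatK (x : E) (t : ℝ) : ℝ :=
  if 0 < t then (4 * π * t) ^ (-(3:ℝ)/2) * Real.exp (-‖x‖^2 / (4*t)) else 0

/-! The only estimate needed of the heat kernel is the parabolic decay
`Γ(x,s) ≤ Cₙ √sⁿ / (|x|² + s)^((n+3)/2)`, valid for every `n`. As `∇Γ = -x Γ / (2s)`, multiplying
`Γ` by a function that is `O(|x|ⁿ)` along with its gradient gives a gradient of size
`√sⁿ / (|x|² + s)²`, locally uniformly in `s`. This bounds `Γ₁` and the terms of `Γ₂` with
`Γ Δ(ψ(|x|))` and `Γ ψ(|x|)` (`n = 0`). The remaining term `∇Γ·∇(ψ(|x|))` is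
`-Γ (x·∇(ψ(|x|))) / (2s)`, and its factor `1/s` is absorbed (`n = 2`) since `∇(ψ(|x|))` vanishes
near the origin. -/

open Filter Topology
open scoped Nat

section ParabolicNorm

variable {V : Type*} [SeminormedAddCommGroup V]

/-- The parabolic size `(|x|² + s)^(1/2)` of a space-time point `(x, s)`, in which the decay of the
heat kernel is measured. -/
def parabolicNorm (x : V) (s : ℝ) : ℝ := √(‖x‖ ^ 2 + s)

lemma parabolicNorm_sq (x : V) {s : ℝ} (hs : 0 ≤ s) : parabolicNorm x s ^ 2 = ‖x‖ ^ 2 + s :=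
  sq_sqrt (by positivity)

lemma parabolicNorm_pow_four (x : V) {s : ℝ} (hs : 0 ≤ s) :
    parabolicNorm x s ^ 4 = (‖x‖ ^ 2 + s) ^ 2 := by
  rw [← parabolicNorm_sq x hs]
  ring

lemma parabolicNorm_pos (x : V) {s : ℝ} (hs : 0 < s) : 0 < parabolicNorm x s :=
  sqrt_pos.2 (by positivity)

lemma norm_le_parabolicNorm (x : V) {s : ℝ} (hs : 0 ≤ s) : ‖x‖ ≤ parabolicNorm x s :=
  le_sqrt_of_sq_le (by linarith)

end ParabolicNorm

section RadialDerivative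

variable {V F : Type*} [NormedAddCommGroup V] [NormedSpace ℝ V] [NormedAddCommGroup F]
  [NormedSpace ℝ F]

/-- The derivative `x·∇f` along the Euler field, the form in which `∇Γ·∇f` appears. -/
def radialDeriv (f : V → F) (x : V) : F := fderiv ℝ f x x

variable {f : V → F}

lemma contDiff_radialDeriv {m n : WithTop ℕ∞} (hf : ContDiff ℝ n f) (hmn : m + 1 ≤ n) :
    ContDiff ℝ m (radialDeriv f) :=
  (hf.fderiv_right hmn).clm_apply contDiff_id

lemma hasCompactSupport_radialDeriv (hf : HasCompactSupport f) :
    HasCompactSupport (radialDeriv f) :=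
  (hf.fderiv ℝ).mono fun x hx h => hx (by simp [radialDeriv, h])

lemma radialDeriv_eventuallyEq_zero {c : F} {x₀ : V} (hf : f =ᶠ[𝓝 x₀] fun _ => c) :
    radialDeriv f =ᶠ[𝓝 x₀] 0 := by
  filter_upwards [hf.fderiv (𝕜 := ℝ)] with x hx
  simp [radialDeriv, hx]

end RadialDerivative

lemma heatK_nonneg (x : E) (s : ℝ) : 0 ≤ heatK x s := by
  unfold heatK
  split_ifs <;> positivity

lemma hasFDerivAt_heatK (x : E) (s : ℝ) :
    HasFDerivAt (fun y => heatK y s) ((-(heatK x s / (2 * s))) • innerSL ℝ x) x := by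
  by_cases hs : 0 < s
  · have hsq : HasFDerivAt (fun y : E => -‖y‖ ^ 2 / (4 * s))
        ((4 * s)⁻¹ • -((2 : ℝ) • innerSL ℝ x)) x := by
      simpa only [div_eq_mul_inv, two_smul] using
        (hasStrictFDerivAt_norm_sq x).hasFDerivAt.fun_neg.mul_const (4 * s)⁻¹
    simp only [heatK, if_pos hs]
    refine (hsq.exp.const_mul _).congr_fderiv ?_
    module
  · simpa only [heatK, if_neg hs, zero_div, neg_zero, zero_smul] using hasFDerivAt_const (0 : ℝ) x

lemma pdE_heatK (i : Fin 3) (x : E) (s : ℝ) :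
    pdE i (fun y => heatK y s) x = -(heatK x s / (2 * s)) * x i := by
  rw [pdE, (hasFDerivAt_heatK x s).fderiv]
  simp [EuclideanSpace.inner_single_right]

lemma sum_mul_pdE (f : E → ℝ) (x : E) : ∑ i, x i * pdE i f x = radialDeriv f x := by
  have h := congrArg (fderiv ℝ f x) ((EuclideanSpace.basisFun (Fin 3) ℝ).sum_repr x)
  simpa only [map_sum, map_smul, smul_eq_mul, EuclideanSpace.basisFun_repr,
    EuclideanSpace.basisFun_apply, pdE, radialDeriv] using h

lemma sum_pdE_heatK_mul_pdE (f : E → ℝ) (x : E) (s : ℝ) :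
    ∑ i, pdE i (fun y => heatK y s) x * pdE i f x = -(heatK x s / (2 * s)) * radialDeriv f x := by
  simp only [pdE_heatK, mul_assoc, ← Finset.mul_sum, sum_mul_pdE]

lemma exp_neg_sq_div_four_mul_pow_le {σ : ℝ} (hσ : 0 ≤ σ) (n : ℕ) :
    exp (-(σ ^ 2 / 4)) * σ ^ n ≤ exp 1 * n ! := by
  have hpow : σ ^ n ≤ exp σ * n ! :=
    (div_le_iff₀ (by positivity)).1 (pow_div_factorial_le_exp σ hσ n)
  have hexp : exp (-(σ ^ 2 / 4)) * exp σ ≤ exp 1 := by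
    rw [← exp_add, exp_le_exp]
    nlinarith [sq_nonneg (σ - 2)]
  calc exp (-(σ ^ 2 / 4)) * σ ^ n ≤ exp (-(σ ^ 2 / 4)) * (exp σ * n !) := by gcongr
    _ = exp (-(σ ^ 2 / 4)) * exp σ * n ! := by ring
    _ ≤ exp 1 * n ! := by gcongr

lemma heatK_mul_sqrt_pow_three_le (x : E) {s : ℝ} (hs : 0 < s) :
    heatK x s * √s ^ 3 ≤ exp (-‖x‖ ^ 2 / (4 * s)) := by
  have hsqrt : s ^ (-(3 : ℝ) / 2) * √s ^ 3 = 1 := by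
    rw [sqrt_eq_rpow, ← rpow_mul_natCast hs.le, ← rpow_add hs]
    norm_num
  have hpi : (4 * π) ^ (-(3 : ℝ) / 2) ≤ 1 :=
    rpow_le_one_of_one_le_of_nonpos (by linarith [pi_gt_three]) (by norm_num)
  rw [heatK, if_pos hs, mul_rpow (by positivity) hs.le]
  calc _ = (4 * π) ^ (-(3 : ℝ) / 2) * (s ^ (-(3 : ℝ) / 2) * √s ^ 3) *
        exp (-‖x‖ ^ 2 / (4 * s)) := by ring
    _ ≤ 1 * 1 * exp (-‖x‖ ^ 2 / (4 * s)) := by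
        rw [hsqrt]
        gcongr
    _ = _ := by ring

lemma heatK_mul_parabolicNorm_pow_le (x : E) {s : ℝ} (hs : 0 < s) (n : ℕ) :
    heatK x s * parabolicNorm x s ^ (n + 3) ≤ exp (5 / 4) * (n + 3)! * √s ^ n := by
  have hs' : 0 < √s := sqrt_pos.2 hs
  set σ := parabolicNorm x s / √s with hσ
  have hσ0 : 0 ≤ σ := (div_pos (parabolicNorm_pos x hs) hs').le
  have hσsq : σ ^ 2 = ‖x‖ ^ 2 / s + 1 := by
    rw [hσ, div_pow, parabolicNorm_sq x hs.le, sq_sqrt hs.le, add_div, div_self hs.ne']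
  have hexp : exp (-‖x‖ ^ 2 / (4 * s)) = exp (1 / 4) * exp (-(σ ^ 2 / 4)) := by
    rw [← exp_add, hσsq]
    congr 1
    field_simp
    ring
  calc heatK x s * parabolicNorm x s ^ (n + 3)
      = heatK x s * √s ^ 3 * σ ^ (n + 3) * √s ^ n := by
        rw [hσ, div_pow, pow_add (√s)]
        field_simp
    _ ≤ exp (1 / 4) * exp (-(σ ^ 2 / 4)) * σ ^ (n + 3) * √s ^ n := by
        rw [← hexp]
        gcongr
        exact heatK_mul_sqrt_pow_three_le x hs
    _ = exp (1 / 4) * (exp (-(σ ^ 2 / 4)) * σ ^ (n + 3)) * √s ^ n := by ring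
    _ ≤ exp (1 / 4) * (exp 1 * (n + 3)!) * √s ^ n := by
        gcongr exp (1 / 4) * ?_ * √s ^ n
        exact exp_neg_sq_div_four_mul_pow_le hσ0 _
    _ = exp (5 / 4) * (n + 3)! * √s ^ n := by
        rw [← mul_assoc, ← exp_add]
        norm_num

lemma norm_fderiv_heatK_mul_le {f : E → ℝ} {x : E} (hf : DifferentiableAt ℝ f x) {s : ℝ}
    (hs : 0 < s) :
    ‖fderiv ℝ (fun y => heatK y s * f y) x‖ ≤
      heatK x s * ‖fderiv ℝ f x‖ + heatK x s * ‖x‖ / s * |f x| := by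
  have hK := heatK_nonneg x s
  rw [((hasFDerivAt_heatK x s).fun_mul hf.hasFDerivAt).fderiv]
  refine (norm_add_le _ _).trans ?_
  rw [norm_smul, norm_smul, norm_smul, innerSL_apply_norm, norm_neg, norm_of_nonneg hK,
    norm_of_nonneg (by positivity : 0 ≤ heatK x s / (2 * s)), norm_eq_abs, mul_comm |f x|,
    div_mul_eq_mul_div]
  gcongr
  linarith

lemma norm_fderiv_heatK_mul_mul_parabolicNorm_pow_le {f : E → ℝ} {x : E}
    (hf : DifferentiableAt ℝ f x) {s : ℝ} (hs : 0 < s) {B : ℝ} (hfB : |f x| ≤ B)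
    (hf'B : ‖fderiv ℝ f x‖ ≤ B) (n : ℕ) :
    ‖fderiv ℝ (fun y => heatK y s * f y) x‖ * parabolicNorm x s ^ (n + 4) ≤
      exp (5 / 4) * (n + 5)! * (1 + √s) * √s ^ n * B := by
  have hB : 0 ≤ B := (abs_nonneg _).trans hfB
  have hK := heatK_nonneg x s
  have hN := parabolicNorm_pos x hs
  set N := parabolicNorm x s
  have hvalue : heatK x s * N ^ (n + 4) ≤ exp (5 / 4) * (n + 5)! * √s ^ (n + 1) := by
    refine (heatK_mul_parabolicNorm_pow_le x hs (n + 1)).trans ?_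
    gcongr exp (5 / 4) * (?_ ! : ℕ) * √s ^ (n + 1)
    exact Nat.le_succ _
  have hgrad : heatK x s * ‖x‖ / s * N ^ (n + 4) ≤ exp (5 / 4) * (n + 5)! * √s ^ n :=
    calc heatK x s * ‖x‖ / s * N ^ (n + 4) ≤ heatK x s * N / s * N ^ (n + 4) := by
          gcongr
          exact norm_le_parabolicNorm x hs.le
      _ = heatK x s * N ^ (n + 2 + 3) / s := by ring
      _ ≤ exp (5 / 4) * (n + 2 + 3)! * √s ^ (n + 2) / s := by
          gcongr ?_ / s
          exact heatK_mul_parabolicNorm_pow_le x hs (n + 2)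
      _ = exp (5 / 4) * (n + 5)! * √s ^ n := by
          rw [pow_add (√s), sq_sqrt hs.le]
          field_simp
  calc _ ≤ (heatK x s * B + heatK x s * ‖x‖ / s * B) * N ^ (n + 4) := by
        gcongr
        refine (norm_fderiv_heatK_mul_le hf hs).trans ?_
        gcongr
    _ = (heatK x s * N ^ (n + 4) + heatK x s * ‖x‖ / s * N ^ (n + 4)) * B := by ring
    _ ≤ (exp (5 / 4) * (n + 5)! * √s ^ (n + 1) + exp (5 / 4) * (n + 5)! * √s ^ n) * B := by
        gcongr
    _ = exp (5 / 4) * (n + 5)! * (1 + √s) * √s ^ n * B := by ring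

lemma norm_fderiv_heatK_mul_le_of_le_mul_norm_pow {f : E → ℝ} {x : E}
    (hf : DifferentiableAt ℝ f x) {s : ℝ} (hs : 0 < s) {M : ℝ} (hM : 0 ≤ M) {n : ℕ}
    (hfM : |f x| ≤ M * ‖x‖ ^ n) (hf'M : ‖fderiv ℝ f x‖ ≤ M * ‖x‖ ^ n) :
    ‖fderiv ℝ (fun y => heatK y s * f y) x‖ ≤
      exp (5 / 4) * (n + 5)! * (1 + √s) * √s ^ n * M / (‖x‖ ^ 2 + s) ^ 2 := by
  have hN := parabolicNorm_pos x hs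
  have hle : M * ‖x‖ ^ n ≤ M * parabolicNorm x s ^ n := by
    gcongr
    exact norm_le_parabolicNorm x hs.le
  have h := norm_fderiv_heatK_mul_mul_parabolicNorm_pow_le hf hs (hfM.trans hle)
    (hf'M.trans hle) n
  rw [← parabolicNorm_pow_four x hs.le, le_div_iff₀ (by positivity)]
  refine le_of_mul_le_mul_right (a := parabolicNorm x s ^ n) ?_ (by positivity)
  calc _ = ‖fderiv ℝ (fun y => heatK y s * f y) x‖ * parabolicNorm x s ^ (n + 4) := by ring
    _ ≤ _ := h
    _ = _ := by ring

lemma exists_norm_le_mul_norm_pow_of_eventuallyEq_zero {V F : Type*}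
    [SeminormedAddCommGroup V] [SeminormedAddCommGroup F] {g : V → F} {B : ℝ}
    (hgB : ∀ x, ‖g x‖ ≤ B) (hg0 : g =ᶠ[𝓝 0] 0) (n : ℕ) :
    ∃ M, 0 ≤ M ∧ ∀ x, ‖g x‖ ≤ M * ‖x‖ ^ n := by
  obtain ⟨r, hr, hgr⟩ := Metric.eventually_nhds_iff_ball.1 hg0
  have hB : 0 ≤ B := (norm_nonneg _).trans (hgB 0)
  refine ⟨B / r ^ n, by positivity, fun x => ?_⟩
  rcases lt_or_ge ‖x‖ r with hx | hx
  · rw [hgr x (mem_ball_zero_iff.2 hx), Pi.zero_apply, norm_zero]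
    positivity
  · calc ‖g x‖ ≤ B / r ^ n * r ^ n := by
          rw [div_mul_cancel₀ _ (by positivity)]
          exact hgB x
      _ ≤ B / r ^ n * ‖x‖ ^ n := by gcongr

lemma exists_bound_fderiv_of_hasCompactSupport {V F : Type*} [NormedAddCommGroup V]
    [NormedSpace ℝ V] [NormedAddCommGroup F] [NormedSpace ℝ F] {f : V → F} (hf : ContDiff ℝ 1 f)
    (hc : HasCompactSupport f) : ∃ B, ∀ x, ‖f x‖ ≤ B ∧ ‖fderiv ℝ f x‖ ≤ B := by
  obtain ⟨B₀, h₀⟩ := hc.exists_bound_of_continuous hf.continuous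
  obtain ⟨B₁, h₁⟩ := (hc.fderiv ℝ).exists_bound_of_continuous (hf.continuous_fderiv one_ne_zero)
  exact ⟨max B₀ B₁, fun x => ⟨(h₀ x).trans (le_max_left _ _), (h₁ x).trans (le_max_right _ _)⟩⟩

/-- The gradient bound of the theorem, `|∇ₓG(x,s)| ≤ C / (|x|² + s)²` for `s > 0`.
Differentiability is part of it because `fderiv` is `0` elsewhere; without it the bound would not
pass to differences. -/
def HasParabolicGradientBound (G : E → ℝ → ℝ) : Prop :=
  ∃ C, ∀ (x : E) (s : ℝ), 0 < s →
    DifferentiableAt ℝ (fun y => G y s) x ∧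
      ‖fderiv ℝ (fun y => G y s) x‖ ≤ C / (‖x‖ ^ 2 + s) ^ 2

namespace HasParabolicGradientBound

lemma sub {G H : E → ℝ → ℝ} (hG : HasParabolicGradientBound G)
    (hH : HasParabolicGradientBound H) :
    HasParabolicGradientBound fun x s => G x s - H x s := by
  obtain ⟨C, hC⟩ := hG
  obtain ⟨D, hD⟩ := hH
  refine ⟨C + D, fun x s hs => ?_⟩
  obtain ⟨hGd, hGC⟩ := hC x s hs
  obtain ⟨hHd, hHD⟩ := hD x s hs
  refine ⟨hGd.fun_sub hHd, ?_⟩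
  rw [fderiv_fun_sub hGd hHd, add_div]
  exact (norm_sub_le _ _).trans (add_le_add hGC hHD)

lemma exists_common_bound {G H : E → ℝ → ℝ} (hG : HasParabolicGradientBound G)
    (hH : HasParabolicGradientBound H) :
    ∃ c > 0, ∀ (x : E) (s : ℝ), 0 < s →
      ‖fderiv ℝ (fun y => G y s) x‖ ≤ c / (‖x‖ ^ 2 + s) ^ 2 ∧
      ‖fderiv ℝ (fun y => H y s) x‖ ≤ c / (‖x‖ ^ 2 + s) ^ 2 := by
  obtain ⟨C, hC⟩ := hG
  obtain ⟨D, hD⟩ := hH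
  refine ⟨max 1 (max C D), by positivity, fun x s hs => ⟨(hC x s hs).2.trans ?_,
    (hD x s hs).2.trans ?_⟩⟩
  all_goals
    gcongr
    simp

lemma div_pow_mul_heatK_mul {f : E → ℝ} (hf : Differentiable ℝ f) {M : ℝ} {n : ℕ}
    (hM : 0 ≤ M) (hfM : ∀ x, |f x| ≤ M * ‖x‖ ^ (2 * n))
    (hf'M : ∀ x, ‖fderiv ℝ f x‖ ≤ M * ‖x‖ ^ (2 * n)) {a : ℝ → ℝ} {T : ℝ}
    (ha : Continuous a) (haT : ∀ s, T < s → a s = 0) :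
    HasParabolicGradientBound fun x s => a s / s ^ n * (heatK x s * f x) := by
  obtain ⟨A, hA⟩ := (isCompact_Icc (a := (0 : ℝ)) (b := T)).exists_bound_of_continuousOn
    (f := fun s => a s * (1 + √s)) (by fun_prop)
  refine ⟨max 0 A * (exp (5 / 4) * (2 * n + 5)! * M), fun x s hs => ?_⟩
  have hd : DifferentiableAt ℝ (fun y => heatK y s * f y) x :=
    (hasFDerivAt_heatK x s).differentiableAt.fun_mul (hf x)
  refine ⟨hd.const_mul _, ?_⟩
  have haA : |a s| * (1 + √s) ≤ max 0 A := by
    rcases lt_or_ge T s with hTs | hsT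
    · simp [haT s hTs]
    · have h := hA s ⟨hs.le, hsT⟩
      rw [norm_mul, norm_eq_abs, norm_of_nonneg (by positivity : 0 ≤ 1 + √s)] at h
      exact h.trans (le_max_right 0 A)
  have hsqrt : √s ^ (2 * n) = s ^ n := by rw [pow_mul, sq_sqrt hs.le]
  rw [fderiv_const_mul hd, norm_smul, norm_div, norm_eq_abs,
    norm_of_nonneg (by positivity : 0 ≤ s ^ n)]
  calc |a s| / s ^ n * ‖fderiv ℝ (fun y => heatK y s * f y) x‖
      ≤ |a s| / s ^ n *
        (exp (5 / 4) * (2 * n + 5)! * (1 + √s) * √s ^ (2 * n) * M / (‖x‖ ^ 2 + s) ^ 2) := by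
        gcongr
        exact norm_fderiv_heatK_mul_le_of_le_mul_norm_pow (hf x) hs hM (hfM x) (hf'M x)
    _ = |a s| * (1 + √s) * (exp (5 / 4) * (2 * n + 5)! * M) / (‖x‖ ^ 2 + s) ^ 2 := by
        rw [hsqrt]
        field_simp
    _ ≤ _ := by gcongr

lemma mul_heatK_mul {f : E → ℝ} (hf : ContDiff ℝ 1 f) (hfc : HasCompactSupport f) {a : ℝ → ℝ}
    {T : ℝ} (ha : Continuous a) (haT : ∀ s, T < s → a s = 0) :
    HasParabolicGradientBound fun x s => a s * (heatK x s * f x) := by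
  obtain ⟨B, hB⟩ := exists_bound_fderiv_of_hasCompactSupport hf hfc
  have h := div_pow_mul_heatK_mul (n := 0) (hf.differentiable one_ne_zero)
    ((norm_nonneg _).trans (hB 0).1) (by simpa using fun x => (hB x).1)
    (by simpa using fun x => (hB x).2) ha haT
  simpa only [pow_zero, div_one] using h

lemma div_pow_mul_heatK_mul_of_eventuallyEq_zero {f : E → ℝ} (hf : ContDiff ℝ 1 f)
    (hfc : HasCompactSupport f) (hf0 : f =ᶠ[𝓝 0] 0) {a : ℝ → ℝ} {T : ℝ} (ha : Continuous a)
    (haT : ∀ s, T < s → a s = 0) (n : ℕ) :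
    HasParabolicGradientBound fun x s => a s / s ^ n * (heatK x s * f x) := by
  obtain ⟨B, hB⟩ := exists_bound_fderiv_of_hasCompactSupport hf hfc
  obtain ⟨M₀, hM₀, h₀⟩ :=
    exists_norm_le_mul_norm_pow_of_eventuallyEq_zero (fun x => (hB x).1) hf0 (2 * n)
  have hf'0 : fderiv ℝ f =ᶠ[𝓝 0] 0 := by simpa using hf0.fderiv (𝕜 := ℝ)
  obtain ⟨M₁, hM₁, h₁⟩ :=
    exists_norm_le_mul_norm_pow_of_eventuallyEq_zero (fun x => (hB x).2) hf'0 (2 * n)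
  refine div_pow_mul_heatK_mul (M := M₀ + M₁) (hf.differentiable one_ne_zero) (by positivity)
    (fun x => (h₀ x).trans ?_) (fun x => (h₁ x).trans ?_) ha haT <;>
  · gcongr
    linarith

end HasParabolicGradientBound

lemma deriv_eq_zero_of_forall_lt {F : Type*} [NormedAddCommGroup F] [NormedSpace ℝ F] {a : ℝ → F}
    {c : F} {T : ℝ} (ha : ∀ t, T < t → a t = c) {s : ℝ} (hs : T < s) : deriv a s = 0 := by
  have h : a =ᶠ[𝓝 s] fun _ => c := (lt_mem_nhds hs).mono ha
  rw [h.deriv_eq, deriv_const]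

section RadialFunction

variable {V F : Type*} [NormedAddCommGroup V] {ψ : ℝ → F} {c : F} {r R : ℝ}

lemma comp_norm_eventuallyEq_const (hr : 0 < r) (hψr : ∀ ξ ≤ r, ψ ξ = c) :
    (fun x : V => ψ ‖x‖) =ᶠ[𝓝 0] fun _ => c := by
  filter_upwards [Metric.ball_mem_nhds (0 : V) hr] with x hx
  exact hψr _ (mem_ball_zero_iff.1 hx).le

lemma hasCompactSupport_comp_norm [ProperSpace V] [Zero F] (hψR : ∀ ξ, R ≤ ξ → ψ ξ = 0) :
    HasCompactSupport fun x : V => ψ ‖x‖ := by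
  refine HasCompactSupport.intro (isCompact_closedBall (0 : V) R) fun x hx => hψR _ ?_
  rw [mem_closedBall_zero_iff, not_le] at hx
  exact hx.le

lemma contDiff_comp_norm [InnerProductSpace ℝ V] [NormedAddCommGroup F] [NormedSpace ℝ F]
    {n : WithTop ℕ∞} (hψ : ContDiff ℝ n ψ) (hr : 0 < r) (hψr : ∀ ξ ≤ r, ψ ξ = c) :
    ContDiff ℝ n fun x : V => ψ ‖x‖ := by
  rw [contDiff_iff_contDiffAt]
  intro x
  rcases eq_or_ne x 0 with rfl | hx
  · exact contDiffAt_const.congr_of_eventuallyEq (comp_norm_eventuallyEq_const hr hψr)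
  · exact hψ.contDiffAt.comp x (contDiffAt_norm ℝ hx)

end RadialFunction

section PartialDerivatives

variable {f : E → ℝ} {m n : WithTop ℕ∞}

lemma contDiff_pdE (hf : ContDiff ℝ n f) (hmn : m + 1 ≤ n) (i : Fin 3) :
    ContDiff ℝ m (pdE i f) :=
  (hf.fderiv_right hmn).clm_apply contDiff_const

lemma contDiff_lapE (hf : ContDiff ℝ n f) (hmn : m + 2 ≤ n) : ContDiff ℝ m (lapE f) := by
  have h : m + 1 + 1 ≤ n := by rwa [add_assoc, one_add_one_eq_two]
  exact ContDiff.sum fun i _ => contDiff_pdE (contDiff_pdE hf h i) le_rfl i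

lemma hasCompactSupport_pdE (hf : HasCompactSupport f) (i : Fin 3) : HasCompactSupport (pdE i f) :=
  hf.fderiv_apply ℝ _

lemma hasCompactSupport_lapE (hf : HasCompactSupport f) : HasCompactSupport (lapE f) := by
  have hlap : lapE f = pdE 0 (pdE 0 f) + pdE 1 (pdE 1 f) + pdE 2 (pdE 2 f) := by
    funext x
    exact Fin.sum_univ_three _
  have h := fun i => hasCompactSupport_pdE (hasCompactSupport_pdE hf i) i
  exact hlap ▸ ((h 0).add (h 1)).add (h 2)

end PartialDerivatives

theorem localized_heat_kernel_gradient_bound_general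
    {ψ : ℝ → ℝ} {c r R : ℝ} (hr : 0 < r) (hψ : ContDiff ℝ 3 ψ)
    (hψR : ∀ ξ, R ≤ ξ → ψ ξ = 0) (hψr : ∀ ξ ≤ r, ψ ξ = c)
    {Γ₁ Γ₂ : E → ℝ → ℝ}
    (hΓ₁ : ∀ x t, Γ₁ x t = heatK x t * ψ ‖x‖ * ψ t)
    (hΓ₂ : ∀ x t, Γ₂ x t =
      2 * ψ t * (∑ i, pdE i (fun y => heatK y t) x * pdE i (fun y => ψ ‖y‖) x)
      + heatK x t * (ψ t * lapE (fun y => ψ ‖y‖) x - deriv ψ t * ψ ‖x‖)) :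
    ∃ c₁ > 0, ∀ (ξ : E) (s : ℝ), 0 < s →
      ‖fderiv ℝ (fun y => Γ₁ y s) ξ‖ ≤ c₁ / (‖ξ‖ ^ 2 + s) ^ 2 ∧
      ‖fderiv ℝ (fun y => Γ₂ y s) ξ‖ ≤ c₁ / (‖ξ‖ ^ 2 + s) ^ 2 := by
  set Φ : E → ℝ := fun y => ψ ‖y‖
  have hΦ : ContDiff ℝ 3 Φ := contDiff_comp_norm hψ hr hψr
  have hΦc : HasCompactSupport Φ := hasCompactSupport_comp_norm hψR
  have hψ' : Continuous (deriv ψ) := hψ.continuous_deriv (by norm_num)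
  have hψT : ∀ s, R < s → ψ s = 0 := fun s hs => hψR s hs.le
  have hψ'T : ∀ s, R < s → deriv ψ s = 0 := fun s hs => deriv_eq_zero_of_forall_lt hψT hs
  have hval {a : ℝ → ℝ} (ha : Continuous a) (haT : ∀ s, R < s → a s = 0) :
      HasParabolicGradientBound fun x s => a s * (heatK x s * Φ x) :=
    .mul_heatK_mul (hΦ.of_le (by norm_num)) hΦc ha haT
  have hlap : HasParabolicGradientBound fun x s => ψ s * (heatK x s * lapE Φ x) :=
    .mul_heatK_mul (contDiff_lapE hΦ (by norm_num)) (hasCompactSupport_lapE hΦc) hψ.continuous hψT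
  have hrad : HasParabolicGradientBound fun x s => ψ s / s ^ 1 * (heatK x s * radialDeriv Φ x) :=
    .div_pow_mul_heatK_mul_of_eventuallyEq_zero (contDiff_radialDeriv hΦ (by norm_num))
      (hasCompactSupport_radialDeriv hΦc)
      (radialDeriv_eventuallyEq_zero (comp_norm_eventuallyEq_const hr hψr)) hψ.continuous hψT 1
  have hΓ₁' : Γ₁ = fun x s => ψ s * (heatK x s * Φ x) := by
    funext x s
    rw [hΓ₁]
    ring
  have hΓ₂' : Γ₂ = fun x s => ψ s * (heatK x s * lapE Φ x) -
      ψ s / s ^ 1 * (heatK x s * radialDeriv Φ x) - deriv ψ s * (heatK x s * Φ x) := by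
    funext x s
    rw [hΓ₂, sum_pdE_heatK_mul_pdE]
    ring
  rw [hΓ₁', hΓ₂']
  exact (hval hψ.continuous hψT).exists_common_bound ((hlap.sub hrad).sub (hval hψ' hψ'T))

/-- Pointwise bound on the spatial gradients of the localized heat kernels `Γ₁`, `Γ₂`
appearing in the proof of Lemma A.1. -/
theorem localized_heat_kernel_gradient_bound
    (ψ : ℝ → ℝ) (hψs : ContDiff ℝ (⊤ : ℕ∞) ψ)
    (hψ01 : ∀ ξ : ℝ, 0 ≤ ψ ξ ∧ ψ ξ ≤ 1)
    (hψ1 : ∀ ξ : ℝ, 1 ≤ ξ → ψ ξ = 0) (hψhalf : ∀ ξ : ℝ, ξ ≤ 1/2 → ψ ξ = 1)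
    (Γ₁ Γ₂ : E → ℝ → ℝ)
    (hΓ₁ : ∀ x t, Γ₁ x t = heatK x t * ψ ‖x‖ * ψ t)
    (hΓ₂ : ∀ x t, Γ₂ x t =
      2 * ψ t * (∑ i, pdE i (fun y => heatK y t) x * pdE i (fun y => ψ ‖y‖) x)
      + heatK x t * (ψ t * lapE (fun y => ψ ‖y‖) x - deriv ψ t * ψ ‖x‖)) :
    ∃ c₁ > 0, ∀ (ξ : E) (s : ℝ), 0 < s →
      ‖fderiv ℝ (fun y => Γ₁ y s) ξ‖ ≤ c₁ / (‖ξ‖^2 + s)^2 ∧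
      ‖fderiv ℝ (fun y => Γ₂ y s) ξ‖ ≤ c₁ / (‖ξ‖^2 + s)^2 :=
  localized_heat_kernel_gradient_bound_general (by norm_num : (0 : ℝ) < 1 / 2)
    (contDiff_infty.1 hψs 3) hψ1 hψhalf hΓ₁ hΓ₂
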